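/- Let K ⊆ ℝⁿ be a closed set, let q : ℝⁿ → (0, ∞) be a measurable, strictly positive function, and let π : ℝⁿ → [0, ∞) be measurable. Then the ghost sampling kernel Q_K is π·1_{Kᶜ}-irreducible with one step: for every x ∈ Kᶜ and every measurable A ⊆ ℝⁿ with ∫_{A ∩ Kᶜ} π(v) dv > 0, it holds that Q_K(x, A) > 0. -/

import Mathlib

open MeasureTheory

noncomputable def ell {n : ℕ} (K : Set (EuclideanSpace ℝ (Fin n)))
    (x φ : EuclideanSpace ℝ (Fin n)) (r : ℝ) : ℝ :=
  ∫ t in (0:ℝ)..r, Set.indicator Kᶜ (fun _ => (1:ℝ)) (x + t • φ)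

open Classical in
noncomputable def ghost {n : ℕ} (K : Set (EuclideanSpace ℝ (Fin n)))
    (q : EuclideanSpace ℝ (Fin n) → ℝ)
    (x y : EuclideanSpace ℝ (Fin n)) : ℝ :=
  if y = x then q 0
  else
    q ((ell K x (‖y - x‖⁻¹ • (y - x)) ‖y - x‖) • (‖y - x‖⁻¹ • (y - x)))
      * (ell K x (‖y - x‖⁻¹ • (y - x)) ‖y - x‖ / ‖y - x‖) ^ (n - 1)
      * Set.indicator Kᶜ (fun _ => (1:ℝ)) y

lemma ell_pos {n : ℕ} (K : Set (EuclideanSpace ℝ (Fin n))) (hK : IsClosed K)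
    (x φ : EuclideanSpace ℝ (Fin n)) (hx : x ∈ Kᶜ) (r : ℝ) (hr : 0 < r) : 0 < ell K x φ r := by
  have hc : Continuous (fun t : ℝ => x + t • φ) := by fun_prop
  have ho : IsOpen ((fun t : ℝ => x + t • φ) ⁻¹' Kᶜ) := hK.isOpen_compl.preimage hc
  have hm : Measurable (fun t : ℝ => Set.indicator Kᶜ (fun _ => (1:ℝ)) (x + t • φ)) :=
    (measurable_const.indicator hK.measurableSet.compl).comp hc.measurable
  have h0 : ∀ t : ℝ, 0 ≤ Set.indicator Kᶜ (fun _ => (1:ℝ)) (x + t • φ) := fun t =>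
    Set.indicator_nonneg (fun _ _ => zero_le_one) _
  have hi : IntervalIntegrable (fun t : ℝ => Set.indicator Kᶜ (fun _ => (1:ℝ)) (x + t • φ))
      volume 0 r := by
    refine (intervalIntegrable_const (c := (1:ℝ))).mono_fun hm.aestronglyMeasurable ?_
    refine Filter.Eventually.of_forall fun t => ?_
    simp only [Set.indicator]
    split_ifs <;> simp
  unfold ell
  rw [intervalIntegral.integral_pos_iff_support_of_nonneg_ae (Filter.Eventually.of_forall h0) hi]
  refine ⟨hr, ?_⟩
  have hne : (((fun t : ℝ => x + t • φ) ⁻¹' Kᶜ) ∩ Set.Ioo 0 r).Nonempty := by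
    have : (0:ℝ) ∈ closure (Set.Ioo 0 r) := by
      rw [closure_Ioo hr.ne]; exact ⟨le_rfl, hr.le⟩
    exact mem_closure_iff.1 this _ ho (by simpa using hx)
  refine lt_of_lt_of_le ((ho.inter isOpen_Ioo).measure_pos volume hne) (measure_mono ?_)
  rintro t ⟨ht, ht'⟩
  refine ⟨?_, ht'.1, ht'.2.le⟩
  have ht : x + t • φ ∈ Kᶜ := ht
  simp only [Function.mem_support, Set.indicator_of_mem ht]
  exact one_ne_zero

lemma ell_meas {n : ℕ} (K : Set (EuclideanSpace ℝ (Fin n))) (hK : IsClosed K)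
    (x : EuclideanSpace ℝ (Fin n)) :
    Measurable (fun y => ell K x (‖y - x‖⁻¹ • (y - x)) ‖y - x‖) := by
  have hF : Measurable (fun p : EuclideanSpace ℝ (Fin n) × ℝ =>
      Set.indicator {p : EuclideanSpace ℝ (Fin n) × ℝ | 0 < p.2 ∧ p.2 ≤ ‖p.1 - x‖}
        (fun p => Set.indicator Kᶜ (fun _ => (1:ℝ)) (x + p.2 • (‖p.1 - x‖⁻¹ • (p.1 - x)))) p) := by
    refine Measurable.indicator ?_ ?_
    · refine (measurable_const.indicator hK.measurableSet.compl).comp ?_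
      fun_prop
    · exact (measurableSet_lt measurable_const measurable_snd).inter
        (measurableSet_le measurable_snd (by fun_prop))
  have := hF.stronglyMeasurable.integral_prod_right' (ν := (volume : Measure ℝ))
  convert this.measurable using 2 with y
  unfold ell
  rw [intervalIntegral.integral_of_le (norm_nonneg _), ← integral_indicator measurableSet_Ioc]
  rfl

/-- The ghost sampling kernel is `π·1_{Kᶜ}`-irreducible, with `n = 1` step. -/
theorem ghost_irreducible {n : ℕ} (K : Set (EuclideanSpace ℝ (Fin n)))
    (hK : IsClosed K)
    (q : EuclideanSpace ℝ (Fin n) → ℝ) (hqm : Measurable q) (hqpos : ∀ z, 0 < q z)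
    (π : EuclideanSpace ℝ (Fin n) → ℝ) (hπm : Measurable π) (hπ0 : ∀ z, 0 ≤ π z) :
    ∀ x ∈ Kᶜ, ∀ A : Set (EuclideanSpace ℝ (Fin n)), MeasurableSet A →
      0 < ∫⁻ v in A ∩ Kᶜ, ENNReal.ofReal (π v) ∂volume →
      0 < ∫⁻ y in A, ENNReal.ofReal (ghost K q x y) ∂volume := by
  intro x hx A hA h
  have hv : 0 < volume (A ∩ Kᶜ) := by
    rw [pos_iff_ne_zero]
    intro h0
    rw [setLIntegral_measure_zero _ _ h0] at h
    exact lt_irrefl _ h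
  have hl := ell_meas K hK x
  have hg : Measurable (fun y => ghost K q x y) := by
    unfold ghost
    refine Measurable.ite (measurableSet_singleton x) measurable_const ?_
    refine ((hqm.comp (hl.smul (by fun_prop))).mul ((hl.div (by fun_prop)).pow_const _)).mul
      (measurable_const.indicator hK.measurableSet.compl)
  rw [setLIntegral_pos_iff hg.ennreal_ofReal]
  refine lt_of_lt_of_le hv (measure_mono ?_)
  rintro y ⟨hyA, hyK⟩
  refine ⟨?_, hyA⟩
  have : 0 < ghost K q x y := by
    unfold ghost
    split_ifs with hyx
    · exact hqpos 0
    · have hr : 0 < ‖y - x‖ := norm_pos_iff.2 (sub_ne_zero.2 hyx)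
      rw [Set.indicator_of_mem hyK, mul_one]
      exact mul_pos (hqpos _) (pow_pos (div_pos (ell_pos K hK x _ hx _ hr) hr) _)
  simpa using this
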